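/- For every ε > 0, the Dirichlet problem Δu(x) = ε⁻²·(exp(u(x)) − |x|²·exp(−u(x))) in B₁(0), u = 0 on ∂B₁(0), has exactly one solution ū_ε. Moreover, ū_ε is radially symmetric (ū_ε(x) depends only on |x|) and is strictly radially increasing: its radial derivative ∂ū_ε/∂r is positive for 0 < |x| < 1. -/

import Mathlib

open Real Set Metric

/-- The Euclidean Laplacian of `u : ℝ² → ℝ`: the sum of the second partial
derivatives along the coordinate directions. -/
noncomputable def laplacian2 (u : EuclideanSpace ℝ (Fin 2) → ℝ)
    (x : EuclideanSpace ℝ (Fin 2)) : ℝ :=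
  ∑ i : Fin 2,
    fderiv ℝ (fun y => fderiv ℝ u y (EuclideanSpace.single i 1)) x (EuclideanSpace.single i 1)

/-- `u` is a solution of the Dirichlet problem
`Δu = ε⁻²·(exp u − |x|²·exp (−u))` in `B₁(0)`, `u = 0` on `∂B₁(0)`:
continuous on the closed unit disc, smooth on the open disc, satisfying the
equation pointwise in the open disc and the boundary condition. -/
def IsDirichletSol (ε : ℝ) (u : EuclideanSpace ℝ (Fin 2) → ℝ) : Prop :=
  ContinuousOn u (closedBall 0 1) ∧
  ContDiffOn ℝ (⊤ : ℕ∞) u (ball 0 1) ∧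
  (∀ x ∈ ball (0 : EuclideanSpace ℝ (Fin 2)) 1,
    laplacian2 u x = (ε ^ 2)⁻¹ * (Real.exp (u x) - ‖x‖ ^ 2 * Real.exp (-u x))) ∧
  (∀ x ∈ sphere (0 : EuclideanSpace ℝ (Fin 2)) 1, u x = 0)

/-!
In the variable `s = ‖x‖²` a radial function `φ (‖x‖²)` on the plane has Laplacian `4 (s φ')'`, so
a radial solution amounts to `(s φ')' = k (exp φ - s exp (-φ))` on `[0, 1]` with `4k = ε⁻²` and
`φ 1 = 0`. Integrating once, a solution regular at `0` satisfies `φ' s = ∫₀¹ F (sσ, φ (sσ)) dσ` with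
`F` the right-hand side. This form has no singularity at `0`, and Picard iteration solves its
initial value problem, smoothly. For bounded `F` the value at `1` differs from the initial value by
a bounded amount, so shooting reaches `φ 1 = 0`; a priori bounds allow the truncation of `F`.

The maximum principle gives uniqueness in the disc, since the nonlinearity is increasing in `u`. It
also shows `s exp (-2φ) ≤ 1`, that is, `(s φ')' ≥ 0`; as `(s φ')' = k exp φ > 0` at `s = 0`, this
yields `φ' > 0`.
-/

open Filter Topology InnerProductSpace Laplacian MeasureTheory intervalIntegral

section Laplacian

variable {E : Type*} [NormedAddCommGroup E] [InnerProductSpace ℝ E]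

lemma eventually_differentiableAt_of_contDiffAt_two {u : E → ℝ} {x : E}
    (hu : ContDiffAt ℝ 2 u x) : ∀ᶠ y in 𝓝 x, DifferentiableAt ℝ u y := by
  filter_upwards [hu.eventually (by simp)] with y hy using hy.differentiableAt two_ne_zero

lemma hasFDerivAt_fderiv_apply {u : E → ℝ} {x : E} (hu : ContDiffAt ℝ 2 u x) (e : E) :
    HasFDerivAt (fun y => fderiv ℝ u y e) ((fderiv ℝ (fderiv ℝ u) x).flip e) x := by
  have h : DifferentiableAt ℝ (fderiv ℝ u) x :=
    (hu.fderiv_right (m := 1) (by norm_num)).differentiableAt one_ne_zero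
  simpa using h.hasFDerivAt.clm_apply (hasFDerivAt_const e x)

lemma fderiv_fderiv_apply_eq_iteratedFDeriv {u : E → ℝ} {x : E} (hu : ContDiffAt ℝ 2 u x)
    (e e' : E) :
    fderiv ℝ (fun y => fderiv ℝ u y e') x e = iteratedFDeriv ℝ 2 u x ![e, e'] := by
  rw [(hasFDerivAt_fderiv_apply hu e').fderiv, iteratedFDeriv_two_apply]
  simp

lemma hasDerivAt_add_smul (x e : E) (t : ℝ) : HasDerivAt (fun t : ℝ => x + t • e) e t := by
  simpa using ((hasDerivAt_id t).smul_const e).const_add x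

lemma tendsto_add_smul_nhds_zero (x e : E) : Tendsto (fun t : ℝ => x + t • e) (𝓝 0) (𝓝 x) := by
  simpa using (hasDerivAt_add_smul x e 0).continuousAt.tendsto

lemma deriv_deriv_comp_add_smul {u : E → ℝ} {x : E} (hu : ContDiffAt ℝ 2 u x) (e : E) :
    deriv (deriv fun t : ℝ => u (x + t • e)) 0 = iteratedFDeriv ℝ 2 u x ![e, e] := by
  have hfirst : deriv (fun t : ℝ => u (x + t • e)) =ᶠ[𝓝 0] fun t => fderiv ℝ u (x + t • e) e := by
    filter_upwards [(tendsto_add_smul_nhds_zero x e).eventually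
      (eventually_differentiableAt_of_contDiffAt_two hu)] with t ht
    exact (ht.hasFDerivAt.comp_hasDerivAt t (hasDerivAt_add_smul x e t)).deriv
  have hsecond : HasFDerivAt (fun y => fderiv ℝ u y e) ((fderiv ℝ (fderiv ℝ u) x).flip e)
      (x + (0 : ℝ) • e) := by
    simpa using hasFDerivAt_fderiv_apply hu e
  rw [hfirst.deriv_eq, iteratedFDeriv_two_apply]
  exact (hsecond.comp_hasDerivAt (0 : ℝ) (hasDerivAt_add_smul x e 0)).deriv

lemma deriv_deriv_nonpos_of_isLocalMax {f : ℝ → ℝ} {a : ℝ} (hmax : IsLocalMax f a)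
    (hf : ContinuousAt f a) : deriv (deriv f) a ≤ 0 := by
  by_contra! hpos
  have hmin : IsLocalMin f a := isLocalMin_of_deriv_deriv_pos hpos hmax.deriv_eq_zero hf
  have hconst : f =ᶠ[𝓝 a] fun _ => f a := by
    filter_upwards [hmax, hmin] with x using le_antisymm
  simp [hconst.deriv.deriv_eq] at hpos

lemma iteratedFDeriv_two_nonpos_of_isLocalMax {u : E → ℝ} {x : E} (hmax : IsLocalMax u x)
    (hu : ContDiffAt ℝ 2 u x) (e : E) : iteratedFDeriv ℝ 2 u x ![e, e] ≤ 0 := by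
  have hlim := tendsto_add_smul_nhds_zero x e
  have hmax_line : IsLocalMax (fun t : ℝ => u (x + t • e)) 0 := by
    simpa [IsLocalMax, IsMaxFilter] using hlim.eventually hmax
  have hcont_line : ContinuousAt (fun t : ℝ => u (x + t • e)) 0 := by
    simpa [ContinuousAt, Function.comp_def] using hu.continuousAt.tendsto.comp hlim
  rw [← deriv_deriv_comp_add_smul hu]
  exact deriv_deriv_nonpos_of_isLocalMax hmax_line hcont_line

lemma iteratedFDeriv_two_comp_norm_sq {g : ℝ → ℝ} {x : E} (hg : ContDiffAt ℝ 2 g (‖x‖ ^ 2))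
    (e : E) :
    iteratedFDeriv ℝ 2 (fun y => g (‖y‖ ^ 2)) x ![e, e] =
      4 * inner ℝ x e ^ 2 * deriv (deriv g) (‖x‖ ^ 2) + 2 * ‖e‖ ^ 2 * deriv g (‖x‖ ^ 2) := by
  have hchain (f : ℝ → ℝ) (y : E) (hf : DifferentiableAt ℝ f (‖y‖ ^ 2)) :
      HasFDerivAt (fun y : E => f (‖y‖ ^ 2)) (deriv f (‖y‖ ^ 2) • (2 • innerSL ℝ y)) y :=
    hf.hasDerivAt.comp_hasFDerivAt y (hasStrictFDerivAt_norm_sq y).hasFDerivAt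
  have hnorm : ContinuousAt (fun y : E => ‖y‖ ^ 2) x := by fun_prop
  have hfirst : (fun y => fderiv ℝ (fun y : E => g (‖y‖ ^ 2)) y e) =ᶠ[𝓝 x]
      fun y => deriv g (‖y‖ ^ 2) * (2 * inner ℝ y e) := by
    filter_upwards [hnorm.eventually (eventually_differentiableAt_of_contDiffAt_two hg)] with y hy
    simp [(hchain g y hy).fderiv]
  have hg' : DifferentiableAt ℝ (deriv g) (‖x‖ ^ 2) :=
    (hg.derivWithin (m := 1) (by norm_num)).differentiableAt one_ne_zero
  have hinner : HasFDerivAt (fun y : E => 2 * inner ℝ y e) ((2 : ℝ) • innerSL ℝ e) x := by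
    simpa [real_inner_comm] using ((innerSL ℝ e).hasFDerivAt (x := x)).const_mul 2
  have hu : ContDiffAt ℝ 2 (fun y : E => g (‖y‖ ^ 2)) x :=
    hg.comp x (contDiff_norm_sq ℝ).contDiffAt
  rw [← fderiv_fderiv_apply_eq_iteratedFDeriv hu, hfirst.fderiv_eq,
    ((hchain _ x hg').fun_mul hinner).fderiv]
  simp
  ring

variable [FiniteDimensional ℝ E]

lemma laplacian_comp_norm_sq {g : ℝ → ℝ} {x : E} (hg : ContDiffAt ℝ 2 g (‖x‖ ^ 2)) :
    Δ (fun y : E => g (‖y‖ ^ 2)) x =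
      4 * ‖x‖ ^ 2 * deriv (deriv g) (‖x‖ ^ 2) +
        2 * Module.finrank ℝ E * deriv g (‖x‖ ^ 2) := by
  simp only [laplacian_eq_iteratedFDeriv_stdOrthonormalBasis, iteratedFDeriv_two_comp_norm_sq hg,
    Finset.sum_add_distrib, ← Finset.sum_mul, ← Finset.mul_sum,
    (stdOrthonormalBasis ℝ E).sum_sq_inner_left, OrthonormalBasis.norm_eq_one]
  simp [mul_comm]

lemma laplacian_norm_sq (x : E) : Δ (fun y : E => ‖y‖ ^ 2) x = 2 * Module.finrank ℝ E := by
  simpa using laplacian_comp_norm_sq (g := fun s => s) (x := x) contDiffAt_id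

lemma laplacian_nonpos_of_isLocalMax {u : E → ℝ} {x : E} (hmax : IsLocalMax u x)
    (hu : ContDiffAt ℝ 2 u x) : Δ u x ≤ 0 := by
  rw [laplacian_eq_iteratedFDeriv_stdOrthonormalBasis]
  exact Finset.sum_nonpos fun i _ => iteratedFDeriv_two_nonpos_of_isLocalMax hmax hu _

/- Adding a small multiple of `‖x‖²` makes `u` strictly subharmonic where it is positive, and
a strictly subharmonic function has no interior maximum. -/
theorem nonpos_of_laplacian_nonneg_of_pos [Nontrivial E] {U : Set E} {u : E → ℝ}
    (hU : IsOpen U) (hU_bdd : Bornology.IsBounded U) (hu_cont : ContinuousOn u (closure U))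
    (hu : ContDiffOn ℝ 2 u U) (hfrontier : ∀ x ∈ frontier U, u x ≤ 0)
    (hΔ : ∀ x ∈ U, 0 < u x → 0 ≤ Δ u x) {x : E} (hx : x ∈ closure U) : u x ≤ 0 := by
  by_contra! hpos
  obtain ⟨R, hR⟩ := hU_bdd.closure.exists_norm_le
  obtain ⟨η, hη, hηR⟩ := exists_pos_mul_lt hpos (R ^ 2)
  obtain ⟨z, hz, hmax⟩ := hU_bdd.isCompact_closure.exists_isMaxOn ⟨x, hx⟩
    (f := u + η • fun y => ‖y‖ ^ 2) (hu_cont.add (by fun_prop))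
  have hz_pos : 0 < u z := by
    have hxz : u x + η * ‖x‖ ^ 2 ≤ u z + η * ‖z‖ ^ 2 := hmax hx
    have hzR : η * ‖z‖ ^ 2 ≤ R ^ 2 * η := by
      rw [mul_comm]; gcongr; exact hR z hz
    have : 0 ≤ η * ‖x‖ ^ 2 := by positivity
    linarith
  have hzU : z ∈ U := by
    by_contra hzU
    exact (hfrontier z (hU.frontier_eq ▸ ⟨hz, hzU⟩)).not_gt hz_pos
  have huz : ContDiffAt ℝ 2 u z := hu.contDiffAt (hU.mem_nhds hzU)
  have hsq : ContDiffAt ℝ 2 (fun y : E => ‖y‖ ^ 2) z := (contDiff_norm_sq ℝ).contDiffAt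
  have hηsq : ContDiffAt ℝ 2 (η • fun y : E => ‖y‖ ^ 2) z := hsq.const_smul η
  have hlocal : IsLocalMax (u + η • fun y : E => ‖y‖ ^ 2) z :=
    hmax.isLocalMax (mem_of_superset (hU.mem_nhds hzU) subset_closure)
  have hΔ_nonpos := laplacian_nonpos_of_isLocalMax hlocal (huz.add hηsq)
  rw [huz.laplacian_add hηsq, laplacian_smul η hsq, laplacian_norm_sq,
    smul_eq_mul] at hΔ_nonpos
  have : 0 < Module.finrank ℝ E := Module.finrank_pos
  have : 0 < η * (2 * Module.finrank ℝ E) := by positivity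
  linarith [hΔ z hzU hz_pos]

theorem le_of_semilinear_laplacian [Nontrivial E] {U : Set E} {u v : E → ℝ} {f : E → ℝ → ℝ}
    (hf : ∀ x ∈ U, Monotone (f x)) (hU : IsOpen U) (hU_bdd : Bornology.IsBounded U)
    (hu_cont : ContinuousOn u (closure U)) (hv_cont : ContinuousOn v (closure U))
    (hu : ContDiffOn ℝ 2 u U) (hv : ContDiffOn ℝ 2 v U)
    (hfrontier : ∀ x ∈ frontier U, u x ≤ v x) (hΔu : ∀ x ∈ U, f x (u x) ≤ Δ u x)
    (hΔv : ∀ x ∈ U, Δ v x ≤ f x (v x)) {x : E} (hx : x ∈ closure U) : u x ≤ v x := by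
  suffices (u - v) x ≤ 0 from sub_nonpos.1 this
  refine nonpos_of_laplacian_nonneg_of_pos hU hU_bdd (hu_cont.sub hv_cont) (hu.sub hv)
    (fun y hy => sub_nonpos.2 (hfrontier y hy)) (fun y hy hpos => ?_) hx
  have hle : f y (v y) ≤ f y (u y) := hf y hy (sub_pos.1 hpos).le
  rw [(hu.contDiffAt (hU.mem_nhds hy)).laplacian_sub (hv.contDiffAt (hU.mem_nhds hy))]
  linarith [hΔu y hy, hΔv y hy]

end Laplacian

section SegmentMean

variable {E : Type*} [NormedAddCommGroup E] [NormedSpace ℝ E]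

lemma hasDerivAt_integral_smul_comp_mul {w : ℝ → ℝ} (hw : Continuous w) {f f' : ℝ → E}
    (hf : ∀ t, HasDerivAt f (f' t) t) (hf' : Continuous f') (t : ℝ) :
    HasDerivAt (fun t => ∫ σ in (0 : ℝ)..1, w σ • f (t * σ))
      (∫ σ in (0 : ℝ)..1, (w σ * σ) • f' (t * σ)) t := by
  have hf_cont : Continuous f := continuous_iff_continuousAt.2 fun x => (hf x).continuousAt
  have hjoint : Continuous fun p : ℝ × ℝ => (w p.2 * p.2) • f' (p.1 * p.2) := by fun_prop
  obtain ⟨C, hC⟩ := ((isCompact_closedBall t 1).prod (isCompact_uIcc (a := 0) (b := 1)))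
    |>.exists_bound_of_continuousOn hjoint.continuousOn
  refine (hasDerivAt_integral_of_dominated_loc_of_deriv_le (bound := fun _ => C)
    (closedBall_mem_nhds t one_pos)
    (.of_forall fun s => Continuous.aestronglyMeasurable (by fun_prop))
    (Continuous.intervalIntegrable (by fun_prop) _ _)
    (Continuous.aestronglyMeasurable (by fun_prop))
    (.of_forall fun σ hσ s hs => hC (s, σ) ⟨hs, uIoc_subset_uIcc hσ⟩)
    intervalIntegrable_const (.of_forall fun σ _ s _ => ?_)).2
  exact (((hf (s * σ)).scomp s (hasDerivAt_mul_const σ)).const_smul (w σ)).congr_deriv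
    (smul_smul _ _ _)

lemma contDiff_integral_smul_comp_mul {n : ℕ} {w : ℝ → ℝ} (hw : Continuous w) {f : ℝ → E}
    (hf : ContDiff ℝ n f) : ContDiff ℝ n fun t => ∫ σ in (0 : ℝ)..1, w σ • f (t * σ) := by
  induction n generalizing w f with
  | zero =>
    have hf_cont : Continuous f := hf.continuous
    refine contDiff_zero.2 (continuous_parametric_intervalIntegral_of_continuous' ?_ 0 1)
    simp only [Function.uncurry_def]
    fun_prop
  | succ n ih =>
    push_cast at hf ⊢
    rw [contDiff_succ_iff_deriv] at hf ⊢
    obtain ⟨hf_diff, -, hf_deriv⟩ := hf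
    have hderiv := hasDerivAt_integral_smul_comp_mul hw (fun t => (hf_diff t).hasDerivAt)
      hf_deriv.continuous
    refine ⟨fun t => (hderiv t).differentiableAt, by simp, ?_⟩
    rw [funext fun t => (hderiv t).deriv]
    exact ih (by fun_prop) hf_deriv

/-- The mean `∫₀¹ f (tσ) dσ` of `f` over the segment from `0` to `t`. It extends `t⁻¹ ∫₀ᵗ f` across
`t = 0` without losing smoothness. -/
noncomputable def segmentMean (f : ℝ → E) (t : ℝ) : E := ∫ σ in (0 : ℝ)..1, f (t * σ)

lemma contDiff_segmentMean {n : ℕ} {f : ℝ → E} (hf : ContDiff ℝ n f) :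
    ContDiff ℝ n (segmentMean f) := by
  simpa [segmentMean] using! contDiff_integral_smul_comp_mul (continuous_const (y := 1)) hf

lemma continuous_segmentMean {f : ℝ → E} (hf : Continuous f) : Continuous (segmentMean f) :=
  contDiff_zero.1 (contDiff_segmentMean (n := 0) (contDiff_zero.2 hf))

lemma segmentMean_sub {f g : ℝ → E} (hf : Continuous f) (hg : Continuous g) (t : ℝ) :
    segmentMean (fun s => f s - g s) t = segmentMean f t - segmentMean g t :=
  integral_sub (Continuous.intervalIntegrable (by fun_prop) _ _)
    (Continuous.intervalIntegrable (by fun_prop) _ _)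

lemma smul_segmentMean (f : ℝ → E) (t : ℝ) : t • segmentMean f t = ∫ s in (0 : ℝ)..t, f s :=
  (smul_integral_comp_mul_left f t).trans (by rw [mul_zero, mul_one])

lemma segmentMean_le {f : ℝ → ℝ} (hf : Continuous f) {C t : ℝ}
    (hC : ∀ σ ∈ Icc (0 : ℝ) 1, f (t * σ) ≤ C) : segmentMean f t ≤ C := by
  simpa [segmentMean] using integral_mono_on (μ := volume) (g := fun _ => C) zero_le_one
    (Continuous.intervalIntegrable (by fun_prop) _ _) intervalIntegrable_const hC

lemma norm_segmentMean_le_of_norm_le {f : ℝ → E} {C t : ℝ}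
    (hf : ∀ σ ∈ Ioc (0 : ℝ) 1, ‖f (t * σ)‖ ≤ C) : ‖segmentMean f t‖ ≤ C := by
  rw [← uIoc_of_le zero_le_one] at hf
  simpa [segmentMean] using intervalIntegral.norm_integral_le_of_norm_le_const hf

lemma norm_segmentMean_le_cosh {f : ℝ → E} {C Λ : ℝ} (hf : ∀ t, ‖f t‖ ≤ C * cosh (Λ * t)) (t : ℝ) :
    ‖segmentMean f t‖ ≤ C * cosh (Λ * t) := by
  have hC : 0 ≤ C := by simpa using (norm_nonneg _).trans (hf 0)
  refine norm_segmentMean_le_of_norm_le fun σ hσ => (hf _).trans ?_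
  gcongr
  rw [cosh_le_cosh, ← mul_assoc, abs_mul, abs_of_pos hσ.1]
  exact mul_le_of_le_one_right (abs_nonneg _) hσ.2

lemma integral_cosh_mul {Λ : ℝ} (hΛ : Λ ≠ 0) (s : ℝ) :
    ∫ t in (0 : ℝ)..s, cosh (Λ * t) = sinh (Λ * s) / Λ := by
  have hderiv (t : ℝ) : HasDerivAt (fun t => sinh (Λ * t) / Λ) (cosh (Λ * t)) t := by
    simpa [hΛ] using (((hasDerivAt_id t).const_mul Λ).sinh).div_const Λ
  rw [integral_eq_sub_of_hasDerivAt (fun t _ => hderiv t)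
    (Continuous.intervalIntegrable (by fun_prop) _ _)]
  simp

lemma norm_integral_le_cosh {f : ℝ → E} {C Λ : ℝ} (hΛ : 0 < Λ)
    (hf : ∀ t, ‖f t‖ ≤ C * cosh (Λ * t)) (s : ℝ) :
    ‖∫ t in (0 : ℝ)..s, f t‖ ≤ C / Λ * cosh (Λ * s) := by
  have hC : 0 ≤ C := by simpa using (norm_nonneg _).trans (hf 0)
  calc ‖∫ t in (0 : ℝ)..s, f t‖
    _ ≤ |∫ t in (0 : ℝ)..s, C * cosh (Λ * t)| :=
      norm_integral_le_abs_of_norm_le (.of_forall fun t => hf t)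
        (Continuous.intervalIntegrable (by fun_prop) _ _)
    _ = C / Λ * |sinh (Λ * s)| := by
      rw [intervalIntegral.integral_const_mul, integral_cosh_mul hΛ.ne', abs_mul, abs_div,
        abs_of_nonneg hC, abs_of_pos hΛ]
      ring
    _ ≤ C / Λ * cosh (Λ * s) := by
      rw [abs_sinh, ← cosh_abs]
      gcongr
      exact (sinh_lt_cosh _).le

lemma hasDerivAt_smul_segmentMean [CompleteSpace E] {f : ℝ → E} (hf : Continuous f) (s : ℝ) :
    HasDerivAt (fun s => s • segmentMean f s) (f s) s := by
  simp only [smul_segmentMean]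
  exact (hf.integral_hasStrictDerivAt 0 s).hasDerivAt

end SegmentMean

section SingularIVP

open BoundedContinuousFunction

variable {E : Type*} [NormedAddCommGroup E] [NormedSpace ℝ E] {F : ℝ × E → E} {M Λ : ℝ}

lemma norm_inv_cosh_smul_le {y : E} {C s : ℝ} (hy : ‖y‖ ≤ C * cosh s) :
    ‖(cosh s)⁻¹ • y‖ ≤ C := by
  rwa [norm_smul, norm_inv, norm_of_nonneg (cosh_pos s).le, inv_mul_le_iff₀ (cosh_pos s), mul_comm]

/-- The Picard operator of `φ s = a + ∫₀ˢ segmentMean (F (·, φ ·))`, written for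
`ψ = φ / cosh (Λ ·)`. The weight plays the role of Bielecki's exponential weight: it makes the
operator a contraction on the whole line. -/
noncomputable def weightedPicard (hF : Continuous F) (hM : ∀ p, ‖F p‖ ≤ M) (hΛ : 0 < Λ) (a : E)
    (ψ : ℝ →ᵇ E) : ℝ →ᵇ E :=
  have hcont : Continuous fun τ => F (τ, cosh (Λ * τ) • ψ τ) := by fun_prop
  .ofNormedAddCommGroup
    (fun s => (cosh (Λ * s))⁻¹ •
      (a + ∫ t in (0 : ℝ)..s, segmentMean (fun τ => F (τ, cosh (Λ * τ) • ψ τ)) t))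
    (.smul (.inv₀ (by fun_prop) fun s => (cosh_pos _).ne')
      (continuous_const.add (continuous_primitive
        (fun _ _ => (continuous_segmentMean hcont).intervalIntegrable _ _) 0)))
    (‖a‖ + M / Λ) (fun s => by
      have hM_nonneg : 0 ≤ M := (norm_nonneg _).trans (hM 0)
      have ha : ‖a‖ ≤ ‖a‖ * cosh (Λ * s) := le_mul_of_one_le_right (norm_nonneg _) (one_le_cosh _)
      refine norm_inv_cosh_smul_le ((norm_add_le_of_le ha (norm_integral_le_cosh (C := M) hΛ
        (norm_segmentMean_le_cosh fun t => (hM _).trans ?_) s)).trans (add_mul _ _ _).ge)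
      exact le_mul_of_one_le_right hM_nonneg (one_le_cosh _))

lemma weightedPicard_apply (hF : Continuous F) (hM : ∀ p, ‖F p‖ ≤ M) (hΛ : 0 < Λ) (a : E)
    (ψ : ℝ →ᵇ E) (s : ℝ) :
    weightedPicard hF hM hΛ a ψ s = (cosh (Λ * s))⁻¹ •
      (a + ∫ t in (0 : ℝ)..s, segmentMean (fun τ => F (τ, cosh (Λ * τ) • ψ τ)) t) := rfl

lemma dist_weightedPicard_le_dist (hF : Continuous F) (hM : ∀ p, ‖F p‖ ≤ M) (hΛ : 0 < Λ) (a b : E)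
    (ψ : ℝ →ᵇ E) : dist (weightedPicard hF hM hΛ a ψ) (weightedPicard hF hM hΛ b ψ) ≤ dist a b := by
  refine (dist_le dist_nonneg).2 fun s => ?_
  rw [dist_eq_norm, weightedPicard_apply, weightedPicard_apply, ← smul_sub,
    add_sub_add_right_eq_sub, dist_eq_norm]
  exact norm_inv_cosh_smul_le (le_mul_of_one_le_right (norm_nonneg _) (one_le_cosh _))

variable {L : NNReal}

lemma contractingWith_weightedPicard (hF : Continuous F) (hM : ∀ p, ‖F p‖ ≤ M) (hΛ : 0 < Λ)
    (hL : ∀ s, LipschitzWith L fun y => F (s, y)) (hLΛ : 2 * L ≤ Λ) (a : E) :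
    ContractingWith (1 / 2) (weightedPicard hF hM hΛ a) := by
  refine ⟨by norm_num, .of_dist_le_mul fun ψ₁ ψ₂ => (dist_le (by positivity)).2 fun s => ?_⟩
  have hcont (ψ : ℝ →ᵇ E) : Continuous fun τ => F (τ, cosh (Λ * τ) • ψ τ) := by fun_prop
  have hint (ψ : ℝ →ᵇ E) :
      IntervalIntegrable (segmentMean fun τ => F (τ, cosh (Λ * τ) • ψ τ)) volume 0 s :=
    (continuous_segmentMean (hcont ψ)).intervalIntegrable _ _
  have hlip (τ : ℝ) : ‖F (τ, cosh (Λ * τ) • ψ₁ τ) - F (τ, cosh (Λ * τ) • ψ₂ τ)‖ ≤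
      L * dist ψ₁ ψ₂ * cosh (Λ * τ) := by
    refine ((hL τ).norm_sub_le _ _).trans ?_
    rw [← smul_sub, norm_smul, norm_of_nonneg (cosh_pos _).le, ← dist_eq_norm, mul_assoc,
      mul_comm (cosh _)]
    gcongr
    exact dist_coe_le_dist τ
  rw [dist_eq_norm, weightedPicard_apply, weightedPicard_apply, ← smul_sub,
    add_sub_add_left_eq_sub, ← integral_sub (hint ψ₁) (hint ψ₂)]
  simp only [← segmentMean_sub (hcont ψ₁) (hcont ψ₂)]
  refine (norm_inv_cosh_smul_le (norm_integral_le_cosh hΛ (norm_segmentMean_le_cosh hlip) s)).trans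
    ?_
  rw [div_le_iff₀ hΛ]
  calc L * dist ψ₁ ψ₂ = 1 / 2 * dist ψ₁ ψ₂ * (2 * L) := by ring
    _ ≤ 1 / 2 * dist ψ₁ ψ₂ * Λ := by gcongr

lemma contDiff_of_hasDerivAt_segmentMean {φ : ℝ → E} (hF : ContDiff ℝ (⊤ : ℕ∞) F)
    (hφ : ∀ s, HasDerivAt φ (segmentMean (fun τ => F (τ, φ τ)) s) s) :
    ContDiff ℝ (⊤ : ℕ∞) φ := by
  refine contDiff_infty.2 fun n => ?_
  induction n with
  | zero => exact contDiff_zero.2 (continuous_iff_continuousAt.2 fun s => (hφ s).continuousAt)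
  | succ n ih =>
    push_cast
    refine contDiff_succ_iff_deriv.2 ⟨fun s => (hφ s).differentiableAt, by simp, ?_⟩
    rw [funext fun s => (hφ s).deriv]
    exact contDiff_segmentMean ((contDiff_infty.1 hF n).comp (contDiff_id.prodMk ih))

variable [CompleteSpace E]

theorem exists_eq_add_integral_segmentMean (hF : Continuous F) (hM : ∀ p, ‖F p‖ ≤ M)
    (hL : ∀ s, LipschitzWith L fun y => F (s, y)) :
    ∃ φ : E → ℝ → E, (∀ a, Continuous (φ a)) ∧ (∀ s, Continuous fun a => φ a s) ∧
      ∀ a s, φ a s = a + ∫ t in (0 : ℝ)..s, segmentMean (fun τ => F (τ, φ a τ)) t := by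
  have hΛ : (0 : ℝ) < 2 * L + 1 := by positivity
  have hcontr (a : E) := contractingWith_weightedPicard hF hM hΛ hL (by linarith) a
  let ψ (a : E) : ℝ →ᵇ E := (hcontr a).fixedPoint
  have hfix (a : E) : weightedPicard hF hM hΛ a (ψ a) = ψ a := (hcontr a).fixedPoint_isFixedPt
  have hψ : LipschitzWith 2 ψ := .of_dist_le_mul fun a b =>
    ((hcontr a).dist_fixedPoint_fixedPoint_of_dist_le' _ (hfix a) (hfix b)
      (dist_weightedPicard_le_dist hF hM hΛ a b)).trans_eq (by push_cast; ring)
  refine ⟨fun a s => cosh ((2 * L + 1) * s) • ψ a s, fun a => by fun_prop, fun s => ?_,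
    fun a s => ?_⟩
  · exact ((continuous_eval_const (F := ℝ →ᵇ E) s).comp hψ.continuous).const_smul _
  · exact ((inv_smul_eq_iff₀ (cosh_pos _).ne').1 (DFunLike.congr_fun (hfix a) s)).symm

lemma hasDerivAt_of_eq_add_integral_segmentMean {φ : ℝ → E} {a : E} (hF : Continuous F)
    (hφ : Continuous φ)
    (hφ_eq : ∀ s, φ s = a + ∫ t in (0 : ℝ)..s, segmentMean (fun τ => F (τ, φ τ)) t) (s : ℝ) :
    HasDerivAt φ (segmentMean (fun τ => F (τ, φ τ)) s) s := by
  have hmean : Continuous (segmentMean fun τ => F (τ, φ τ)) :=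
    continuous_segmentMean (by fun_prop)
  exact ((hmean.integral_hasStrictDerivAt 0 s).hasDerivAt.const_add a).congr_of_eventuallyEq
    (.of_forall hφ_eq)

lemma hasDerivAt_smul_deriv_of_hasDerivAt_segmentMean {φ : ℝ → E} (hF : Continuous F)
    (hφ : ∀ s, HasDerivAt φ (segmentMean (fun τ => F (τ, φ τ)) s) s) (s : ℝ) :
    HasDerivAt (fun t => t • deriv φ t) (F (s, φ s)) s := by
  have hφ_cont : Continuous φ := continuous_iff_continuousAt.2 fun s => (hφ s).continuousAt
  rw [funext fun t => (hφ t).deriv]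
  exact hasDerivAt_smul_segmentMean (f := fun τ => F (τ, φ τ)) (by fun_prop) s

end SingularIVP

section RadialMaximumPrinciple

lemma laplacian_comp_norm_sq_of_finrank_eq_two {E : Type*} [NormedAddCommGroup E]
    [InnerProductSpace ℝ E] (hE : Module.finrank ℝ E = 2) {g : ℝ → ℝ} {x : E}
    (hg : ContDiffAt ℝ 2 g (‖x‖ ^ 2)) :
    haveI := Module.finite_of_finrank_eq_succ hE
    Δ (fun y : E => g (‖y‖ ^ 2)) x = 4 * deriv (fun s => s * deriv g s) (‖x‖ ^ 2) := by
  have := Module.finite_of_finrank_eq_succ hE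
  have hg' : DifferentiableAt ℝ (deriv g) (‖x‖ ^ 2) :=
    (hg.derivWithin (m := 1) (by norm_num)).differentiableAt one_ne_zero
  rw [laplacian_comp_norm_sq hg, hE, ((hasDerivAt_id' _).fun_mul hg'.hasDerivAt).deriv]
  push_cast
  ring

/- Read as a statement about `x ↦ g (‖x‖²)` in the plane, the singular endpoint `s = 0` becomes an
interior point and needs no boundary condition. -/
theorem nonpos_of_deriv_mul_deriv_nonneg_of_pos {g : ℝ → ℝ} (hg : ContDiff ℝ 2 g)
    (hg_one : g 1 ≤ 0)
    (h : ∀ s ∈ Ico (0 : ℝ) 1, 0 < g s → 0 ≤ deriv (fun t => t * deriv g t) s) {s : ℝ}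
    (hs : s ∈ Icc (0 : ℝ) 1) : g s ≤ 0 := by
  obtain ⟨x, hx⟩ := exists_norm_eq ℂ (sqrt_nonneg s)
  have hx_sq : ‖x‖ ^ 2 = s := by rw [hx, sq_sqrt hs.1]
  have hu : ContDiff ℝ 2 fun z : ℂ => g (‖z‖ ^ 2) := hg.comp (contDiff_norm_sq ℝ)
  rw [← hx_sq]
  refine nonpos_of_laplacian_nonneg_of_pos (U := ball (0 : ℂ) 1) (u := fun z => g (‖z‖ ^ 2))
    isOpen_ball isBounded_ball hu.continuous.continuousOn hu.contDiffOn (fun z hz => ?_)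
    (fun z hz hpos => ?_) ?_
  · rw [frontier_ball 0 one_ne_zero, mem_sphere_zero_iff_norm] at hz
    simpa [hz] using hg_one
  · rw [laplacian_comp_norm_sq_of_finrank_eq_two Complex.finrank_real_complex hg.contDiffAt]
    have hz_sq : ‖z‖ ^ 2 < 1 := by simpa using hz
    have := h _ ⟨by positivity, hz_sq⟩ hpos
    positivity
  · rw [closure_ball 0 one_ne_zero, mem_closedBall_zero_iff, hx]
    exact sqrt_le_one.2 hs.2

end RadialMaximumPrinciple

section SingularBVP

variable {F : ℝ × ℝ → ℝ}

theorem exists_hasDerivAt_segmentMean_of_bounded {M : ℝ} {L : NNReal} (hF : Continuous F)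
    (hM : ∀ p, ‖F p‖ ≤ M) (hL : ∀ s, LipschitzWith L fun y => F (s, y)) (b : ℝ) :
    ∃ φ : ℝ → ℝ, φ 1 = b ∧ ∀ s, HasDerivAt φ (segmentMean (fun τ => F (τ, φ τ)) s) s := by
  obtain ⟨φ, hφ, hφ_one, hφ_eq⟩ := exists_eq_add_integral_segmentMean hF hM hL
  have hshoot (a : ℝ) : |φ a 1 - a| ≤ M := by
    rw [hφ_eq, add_sub_cancel_left, ← smul_segmentMean, one_smul]
    exact norm_segmentMean_le_of_norm_le fun _ _ =>
      norm_segmentMean_le_of_norm_le (f := fun τ => F (τ, φ a τ)) fun _ _ => hM _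
  have hb : b ∈ Icc (φ (b - M) 1) (φ (b + M) 1) := by
    constructor <;> linarith [abs_le.1 (hshoot (b - M)), abs_le.1 (hshoot (b + M))]
  obtain ⟨a, ha⟩ := intermediate_value_univ _ _ (hφ_one 1) hb
  exact ⟨φ a, ha, hasDerivAt_of_eq_add_integral_segmentMean hF (hφ a) (hφ_eq a)⟩

lemma mem_Icc_of_hasDerivAt_segmentMean {φ : ℝ → ℝ} {K : ℝ} (hF : ContDiff ℝ (⊤ : ℕ∞) F)
    (hF_nonneg : ∀ s ∈ Icc (0 : ℝ) 1, ∀ y, 0 ≤ y → 0 ≤ F (s, y))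
    (hF_le : ∀ s ∈ Icc (0 : ℝ) 1, ∀ y ≤ 0, F (s, y) ≤ K) (hφ_one : φ 1 = 0)
    (hφ : ∀ s, HasDerivAt φ (segmentMean (fun τ => F (τ, φ τ)) s) s) {s : ℝ}
    (hs : s ∈ Icc (0 : ℝ) 1) : φ s ∈ Icc (-K) 0 := by
  have hφ_smooth := contDiff_of_hasDerivAt_segmentMean hF hφ
  have hφ_nonpos {t : ℝ} (ht : t ∈ Icc (0 : ℝ) 1) : φ t ≤ 0 := by
    refine nonpos_of_deriv_mul_deriv_nonneg_of_pos (hφ_smooth.of_le (by norm_cast))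
      hφ_one.le (fun τ hτ hpos => ?_) ht
    have hode := hasDerivAt_smul_deriv_of_hasDerivAt_segmentMean hF.continuous hφ τ
    simp only [smul_eq_mul] at hode
    rw [hode.deriv]
    exact hF_nonneg τ (Ico_subset_Icc_self hτ) _ hpos.le
  have hderiv_le (t : ℝ) (ht : t ∈ Icc (0 : ℝ) 1) : deriv φ t ≤ K := by
    rw [(hφ t).deriv]
    refine segmentMean_le (by fun_prop) fun σ hσ => ?_
    have htσ : t * σ ∈ Icc (0 : ℝ) 1 := unitInterval.mul_mem ht hσ
    exact hF_le _ htσ _ (hφ_nonpos htσ)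
  have hK : 0 ≤ K := (hF_nonneg s hs 0 le_rfl).trans (hF_le s hs 0 le_rfl)
  have hgrowth : φ 1 - φ s ≤ K * (1 - s) :=
    (convex_Icc 0 1).image_sub_le_mul_sub_of_deriv_le hφ_smooth.continuous.continuousOn
      (fun t _ => (hφ t).differentiableAt.differentiableWithinAt)
      (fun t ht => hderiv_le t (interior_subset ht)) s hs 1 (by simp) hs.2
  exact ⟨by nlinarith [hs.1], hφ_nonpos hs⟩

/- A bump function makes the nonlinearity bounded and Lipschitz without changing its signs, so the
a priori bound `-K ≤ φ ≤ 0` still holds and keeps `φ` where the bump function is `1`. -/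
theorem exists_contDiff_hasDerivAt_mul_deriv {K : ℝ} (hF : ContDiff ℝ (⊤ : ℕ∞) F)
    (hF_nonneg : ∀ s ∈ Icc (0 : ℝ) 1, ∀ y, 0 ≤ y → 0 ≤ F (s, y))
    (hF_le : ∀ s ∈ Icc (0 : ℝ) 1, ∀ y ≤ 0, F (s, y) ≤ K) :
    ∃ φ : ℝ → ℝ, ContDiff ℝ (⊤ : ℕ∞) φ ∧ φ 1 = 0 ∧
      ∀ s ∈ Icc (0 : ℝ) 1, HasDerivAt (fun t => t * deriv φ t) (F (s, φ s)) s := by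
  have hK : 0 ≤ K := (hF_nonneg 0 (by simp) 0 le_rfl).trans (hF_le 0 (by simp) 0 le_rfl)
  let χ : ContDiffBump (0 : ℝ × ℝ) := ⟨1 + K, 2 + K, by positivity, by linarith⟩
  let G : ℝ × ℝ → ℝ := fun p => χ p * F p
  have hG : ContDiff ℝ (⊤ : ℕ∞) G := χ.contDiff.mul hF
  have hG_supp : HasCompactSupport G := χ.hasCompactSupport.mul_right
  obtain ⟨M, hM⟩ := hG.continuous.bounded_above_of_compact_support hG_supp
  obtain ⟨L, hL⟩ := hG.lipschitzWith_of_hasCompactSupport hG_supp (by simp)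
  have hG_nonneg (s : ℝ) (hs : s ∈ Icc (0 : ℝ) 1) (y : ℝ) (hy : 0 ≤ y) : 0 ≤ G (s, y) :=
    mul_nonneg χ.nonneg (hF_nonneg s hs y hy)
  have hG_le (s : ℝ) (hs : s ∈ Icc (0 : ℝ) 1) (y : ℝ) (hy : y ≤ 0) : G (s, y) ≤ K :=
    (mul_le_mul_of_nonneg_left (hF_le s hs y hy) χ.nonneg).trans
      (mul_le_of_le_one_left hK χ.le_one)
  obtain ⟨φ, hφ_one, hφ⟩ := exists_hasDerivAt_segmentMean_of_bounded hG.continuous hM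
    (fun s => hL.comp (LipschitzWith.prodMk_left s)) 0
  refine ⟨φ, contDiff_of_hasDerivAt_segmentMean hG hφ, hφ_one, fun s hs => ?_⟩
  have hφ_mem := mem_Icc_of_hasDerivAt_segmentMean hG hG_nonneg hG_le hφ_one hφ hs
  have hχ : χ (s, φ s) = 1 := by
    refine χ.one_of_mem_closedBall (mem_closedBall_zero_iff.2 (norm_prod_le_iff.2 ⟨?_, ?_⟩)) <;>
      rw [norm_eq_abs, abs_le] <;> constructor <;> dsimp only [χ] <;>
      linarith [hs.1, hs.2, hφ_mem.1, hφ_mem.2]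
  simpa [G, hχ] using hasDerivAt_smul_deriv_of_hasDerivAt_segmentMean hG.continuous hφ s

end SingularBVP

section RadialProfile

/-- `φ` is the profile of a radial solution `x ↦ φ (‖x‖²)` of
`Δu = 4k (exp u - ‖x‖² exp (-u))` on the unit disc with `u = 0` on the unit circle: in the variable
`s = ‖x‖²` the Laplacian is `4 (s φ')'`. -/
structure IsRadialProfile (k : ℝ) (φ : ℝ → ℝ) : Prop where
  contDiff : ContDiff ℝ (⊤ : ℕ∞) φ
  apply_one : φ 1 = 0
  hasDerivAt_mul_deriv : ∀ s ∈ Icc (0 : ℝ) 1,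
    HasDerivAt (fun t => t * deriv φ t) (k * (exp (φ s) - s * exp (-φ s))) s

variable {k : ℝ} {φ : ℝ → ℝ}

theorem exists_isRadialProfile (hk : 0 ≤ k) : ∃ φ, IsRadialProfile k φ := by
  have hF : ContDiff ℝ (⊤ : ℕ∞) fun p : ℝ × ℝ => k * (exp p.2 - p.1 * exp (-p.2)) := by fun_prop
  have hF_nonneg (s : ℝ) (hs : s ∈ Icc (0 : ℝ) 1) (y : ℝ) (hy : 0 ≤ y) :
      0 ≤ k * (exp y - s * exp (-y)) := by
    have hle : s * exp (-y) ≤ 1 * exp y := by gcongr <;> linarith [hs.2]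
    exact mul_nonneg hk (by linarith)
  have hF_le (s : ℝ) (hs : s ∈ Icc (0 : ℝ) 1) (y : ℝ) (hy : y ≤ 0) :
      k * (exp y - s * exp (-y)) ≤ k := by
    refine mul_le_of_le_one_right hk ?_
    linarith [exp_le_one_iff.2 hy, mul_nonneg hs.1 (exp_pos (-y)).le]
  obtain ⟨φ, hφ, hφ_one, hode⟩ := exists_contDiff_hasDerivAt_mul_deriv hF hF_nonneg hF_le
  exact ⟨φ, hφ, hφ_one, hode⟩

lemma exp_sub_mul_exp_neg (s y : ℝ) :
    exp y - s * exp (-y) = (1 - s * exp (-2 * y)) * exp y := by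
  rw [sub_mul, one_mul, mul_assoc, ← exp_add]
  ring_nf

namespace IsRadialProfile

/- With `p = s φ'` and `z = s exp (-2φ) - 1`, one has
`(s z')' = exp (-2φ) ((1 - 2p)² - 2 s p')`, and `p' ≤ 0` wherever `z > 0`. -/
lemma mul_exp_neg_two_mul_le_one (hφ : IsRadialProfile k φ) (hk : 0 ≤ k) {s : ℝ}
    (hs : s ∈ Icc (0 : ℝ) 1) : s * exp (-2 * φ s) ≤ 1 := by
  have hexp (t : ℝ) : HasDerivAt (fun t => exp (-2 * φ t)) (exp (-2 * φ t) * (-2 * deriv φ t)) t :=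
    ((hφ.contDiff.differentiable (by simp) t).hasDerivAt.const_mul (-2)).exp
  have hz' (t : ℝ) : HasDerivAt (fun t => t * exp (-2 * φ t) - 1)
      (exp (-2 * φ t) * (1 - 2 * (t * deriv φ t))) t :=
    (((hasDerivAt_id' t).fun_mul (hexp t)).sub_const 1).congr_deriv (by ring)
  have hz_smooth : ContDiff ℝ 2 fun t => t * exp (-2 * φ t) - 1 := by
    have : ContDiff ℝ 2 φ := hφ.contDiff.of_le (by norm_cast)
    fun_prop
  have hz_one : 1 * exp (-2 * φ 1) - 1 ≤ 0 := by simp [hφ.apply_one]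
  refine sub_nonpos.1
    (nonpos_of_deriv_mul_deriv_nonneg_of_pos hz_smooth hz_one (fun t ht hpos => ?_) hs)
  have hp' := hφ.hasDerivAt_mul_deriv t (Ico_subset_Icc_self ht)
  set p' := k * (exp (φ t) - t * exp (-φ t)) with hp'_def
  have hp'_nonpos : p' ≤ 0 := by
    rw [hp'_def, exp_sub_mul_exp_neg]
    exact mul_nonpos_of_nonneg_of_nonpos hk
      (mul_nonpos_of_nonpos_of_nonneg (by linarith) (exp_pos _).le)
  rw [funext fun t => (hz' t).deriv,
    ((hasDerivAt_id' t).fun_mul ((hexp t).fun_mul ((hp'.const_mul 2).const_sub 1))).deriv]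
  calc 0 ≤ exp (-2 * φ t) * ((1 - 2 * (t * deriv φ t)) ^ 2 + 2 * t * -p') := by
        have := ht.1
        have := neg_nonneg.2 hp'_nonpos
        positivity
    _ = _ := by ring

theorem deriv_pos (hφ : IsRadialProfile k φ) (hk : 0 < k) {s : ℝ} (hs : s ∈ Ioo (0 : ℝ) 1) :
    0 < deriv φ s := by
  have hsub : Icc 0 s ⊆ Icc (0 : ℝ) 1 := Icc_subset_Icc_right hs.2.le
  have hrhs_cont : Continuous fun t => k * (exp (φ t) - t * exp (-φ t)) := by
    have := hφ.contDiff.continuous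
    fun_prop
  have hrhs_nonneg (t : ℝ) (ht : t ∈ Icc (0 : ℝ) 1) : 0 ≤ k * (exp (φ t) - t * exp (-φ t)) := by
    rw [exp_sub_mul_exp_neg]
    have := sub_nonneg.2 (hφ.mul_exp_neg_two_mul_le_one hk.le ht)
    positivity
  have hintegral : ∫ t in (0 : ℝ)..s, k * (exp (φ t) - t * exp (-φ t)) = s * deriv φ s := by
    rw [← uIcc_of_le hs.1.le] at hsub
    rw [integral_eq_sub_of_hasDerivAt (fun t ht => hφ.hasDerivAt_mul_deriv t (hsub ht))
      (hrhs_cont.intervalIntegrable _ _), zero_mul, sub_zero]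
  have hpos : 0 < ∫ t in (0 : ℝ)..s, k * (exp (φ t) - t * exp (-φ t)) :=
    intervalIntegral.integral_pos hs.1 hrhs_cont.continuousOn
      (fun t ht => hrhs_nonneg t (hsub (Ioc_subset_Icc_self ht)))
      ⟨0, left_mem_Icc.2 hs.1.le, by simpa using by positivity⟩
  exact pos_of_mul_pos_right (hintegral ▸ hpos) hs.1.le

end IsRadialProfile

end RadialProfile

section DirichletProblem

lemma laplacian2_eq_laplacian {u : EuclideanSpace ℝ (Fin 2) → ℝ} {x : EuclideanSpace ℝ (Fin 2)}
    (hu : ContDiffAt ℝ 2 u x) : laplacian2 u x = Δ u x := by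
  simp [laplacian2, laplacian_eq_iteratedFDeriv_orthonormalBasis u (EuclideanSpace.basisFun _ ℝ),
    fderiv_fderiv_apply_eq_iteratedFDeriv hu]

lemma monotone_const_mul_exp_sub_mul_exp_neg {c m : ℝ} (hc : 0 ≤ c) (hm : 0 ≤ m) :
    Monotone fun y => c * (exp y - m * exp (-y)) := by
  intro y z hyz
  dsimp only
  gcongr

variable {ε : ℝ} {u v : EuclideanSpace ℝ (Fin 2) → ℝ}

namespace IsDirichletSol

lemma contDiffAt (hu : IsDirichletSol ε u) {x : EuclideanSpace ℝ (Fin 2)} (hx : x ∈ ball 0 1) :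
    ContDiffAt ℝ 2 u x :=
  (hu.2.1.contDiffAt (isOpen_ball.mem_nhds hx)).of_le (by norm_cast)

lemma laplacian_eq (hu : IsDirichletSol ε u) {x : EuclideanSpace ℝ (Fin 2)} (hx : x ∈ ball 0 1) :
    Δ u x = (ε ^ 2)⁻¹ * (exp (u x) - ‖x‖ ^ 2 * exp (-u x)) :=
  (laplacian2_eq_laplacian (hu.contDiffAt hx)).symm.trans (hu.2.2.1 x hx)

lemma le (hu : IsDirichletSol ε u) (hv : IsDirichletSol ε v) {x : EuclideanSpace ℝ (Fin 2)}
    (hx : x ∈ closedBall 0 1) : u x ≤ v x := by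
  rw [← closure_ball 0 one_ne_zero] at hx
  refine le_of_semilinear_laplacian
    (f := fun x y => (ε ^ 2)⁻¹ * (exp y - ‖x‖ ^ 2 * exp (-y)))
    (fun x _ => monotone_const_mul_exp_sub_mul_exp_neg (by positivity) (by positivity))
    isOpen_ball isBounded_ball
    (closure_ball (0 : EuclideanSpace ℝ (Fin 2)) one_ne_zero ▸ hu.1)
    (closure_ball (0 : EuclideanSpace ℝ (Fin 2)) one_ne_zero ▸ hv.1)
    (fun y hy => (hu.contDiffAt hy).contDiffWithinAt)
    (fun y hy => (hv.contDiffAt hy).contDiffWithinAt) (fun y hy => ?_)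
    (fun y hy => (hu.laplacian_eq hy).ge) (fun y hy => (hv.laplacian_eq hy).le) hx
  rw [frontier_ball 0 one_ne_zero] at hy
  rw [hu.2.2.2 y hy, hv.2.2.2 y hy]

lemma eqOn (hu : IsDirichletSol ε u) (hv : IsDirichletSol ε v) : EqOn u v (closedBall 0 1) :=
  fun _ hx => (hu.le hv hx).antisymm (hv.le hu hx)

end IsDirichletSol

theorem exists_isDirichletSol_comp_norm_sq (hε : 0 < ε) :
    ∃ φ : ℝ → ℝ, Differentiable ℝ φ ∧ (∀ s ∈ Ioo (0 : ℝ) 1, 0 < deriv φ s) ∧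
      IsDirichletSol ε fun x => φ (‖x‖ ^ 2) := by
  have hk : 0 < (ε ^ 2)⁻¹ / 4 := by positivity
  obtain ⟨φ, hφ⟩ := exists_isRadialProfile hk.le
  have hu : ContDiff ℝ (⊤ : ℕ∞) fun x : EuclideanSpace ℝ (Fin 2) => φ (‖x‖ ^ 2) :=
    hφ.contDiff.comp (contDiff_norm_sq ℝ)
  refine ⟨φ, hφ.contDiff.differentiable (by simp), fun s hs => hφ.deriv_pos hk hs,
    hu.continuous.continuousOn, hu.contDiffOn, fun x hx => ?_, fun x hx => ?_⟩
  · have hx_sq : ‖x‖ ^ 2 ∈ Icc (0 : ℝ) 1 :=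
      ⟨by positivity, pow_le_one₀ (norm_nonneg x) (mem_ball_zero_iff.1 hx).le⟩
    rw [laplacian2_eq_laplacian (hu.contDiffAt.of_le (by norm_cast)),
      laplacian_comp_norm_sq_of_finrank_eq_two (by simp)
        (hφ.contDiff.contDiffAt.of_le (by norm_cast)),
      (hφ.hasDerivAt_mul_deriv _ hx_sq).deriv]
    ring
  · simp [mem_sphere_zero_iff_norm.1 hx, hφ.apply_one]

end DirichletProblem

/-- for every `ε > 0` the Dirichlet problem has exactly one solution,
and this solution is radially symmetric with positive radial derivative for `0 < |x| < 1`. -/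
theorem stmt_0 (ε : ℝ) (hε : 0 < ε) :
    (∃ u, IsDirichletSol ε u) ∧
    (∀ u v, IsDirichletSol ε u → IsDirichletSol ε v →
      ∀ x ∈ closedBall (0 : EuclideanSpace ℝ (Fin 2)) 1, u x = v x) ∧
    (∀ u, IsDirichletSol ε u → ∃ g : ℝ → ℝ,
      (∀ x ∈ closedBall (0 : EuclideanSpace ℝ (Fin 2)) 1, u x = g ‖x‖) ∧
      (∀ r ∈ Ioo (0 : ℝ) 1, 0 < deriv g r)) := by
  obtain ⟨φ, hφ, hφ_pos, hsol⟩ := exists_isDirichletSol_comp_norm_sq hε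
  refine ⟨⟨_, hsol⟩, fun u v hu hv => hu.eqOn hv, fun u hu =>
    ⟨fun r => φ (r ^ 2), hu.eqOn hsol, fun r hr => ?_⟩⟩
  have hderiv : HasDerivAt (fun r => φ (r ^ 2)) (deriv φ (r ^ 2) * (2 * r)) r := by
    simpa using! (hφ (r ^ 2)).hasDerivAt.comp r (hasDerivAt_pow 2 r)
  have hr_sq : r ^ 2 ∈ Ioo (0 : ℝ) 1 := ⟨pow_pos hr.1 2, pow_lt_one₀ hr.1.le hr.2 two_ne_zero⟩
  rw [hderiv.deriv]
  exact mul_pos (hφ_pos _ hr_sq) (mul_pos two_pos hr.1)
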